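/- For every τ in the complex upper half plane, E_{3,2}(τ)⁴ − E_{3,4}(τ)² = 3888·(η(τ)η(3τ))⁶·E_{1,−3}(τ)². -/

import Mathlib

open Complex

/-- `q = exp(2πiτ)`. -/
noncomputable def qq (τ : ℂ) : ℂ := Complex.exp (2 * Real.pi * Complex.I * τ)

/-- `σ_k(n) = Σ_{d ∣ n} d^k`, as a complex number. -/
noncomputable def sigmaC (k n : ℕ) : ℂ := ∑ d ∈ n.divisors, (d : ℂ) ^ k

/-- Eisenstein series `E₂(τ) = 1 - 24 Σ_{n≥1} σ₁(n) qⁿ`. -/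
noncomputable def E₂ (τ : ℂ) : ℂ := 1 - 24 * ∑' n : ℕ, sigmaC 1 (n + 1) * qq τ ^ (n + 1)

/-- Eisenstein series `E₄(τ) = 1 + 240 Σ_{n≥1} σ₃(n) qⁿ`. -/
noncomputable def E₄ (τ : ℂ) : ℂ := 1 + 240 * ∑' n : ℕ, sigmaC 3 (n + 1) * qq τ ^ (n + 1)

/-- Eisenstein series `E₆(τ) = 1 - 504 Σ_{n≥1} σ₅(n) qⁿ`. -/
noncomputable def E₆ (τ : ℂ) : ℂ := 1 - 504 * ∑' n : ℕ, sigmaC 5 (n + 1) * qq τ ^ (n + 1)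

/-- Dedekind eta function `η(τ) = exp(πiτ/12) ∏_{n≥1} (1 - qⁿ)`. -/
noncomputable def η (τ : ℂ) : ℂ :=
  Complex.exp (Real.pi * Complex.I * τ / 12) * ∏' n : ℕ, (1 - qq τ ^ (n + 1))

/-- Theta function `θ(τ) = Σ_{n ∈ ℤ} q^{n²}`. -/
noncomputable def θ (τ : ℂ) : ℂ := ∑' n : ℤ, qq τ ^ (n ^ 2)

/-- The character `χ₋₄`: `χ₋₄(d) = 1, -1, 0` according as `d ≡ 1, 3, 0/2 (mod 4)`. -/
noncomputable def χ₄ (d : ℕ) : ℂ := if d % 4 = 1 then 1 else if d % 4 = 3 then -1 else 0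

/-- The character `χ₋₃`: `χ₋₃(d) = 1, -1, 0` according as `d ≡ 1, 2, 0 (mod 3)`. -/
noncomputable def χ₃ (d : ℕ) : ℂ := if d % 3 = 1 then 1 else if d % 3 = 2 then -1 else 0

/-- `E_{1,-4}(τ) = 1/4 + Σ_{n≥1} (Σ_{d∣n} χ₋₄(d)) qⁿ`. -/
noncomputable def E₁₄ (τ : ℂ) : ℂ :=
  1 / 4 + ∑' n : ℕ, (∑ d ∈ (n + 1).divisors, χ₄ d) * qq τ ^ (n + 1)

/-- `E_{1,-3}(τ) = 1/6 + Σ_{n≥1} (Σ_{d∣n} χ₋₃(d)) qⁿ`. -/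
noncomputable def E₁₃ (τ : ℂ) : ℂ :=
  1 / 6 + ∑' n : ℕ, (∑ d ∈ (n + 1).divisors, χ₃ d) * qq τ ^ (n + 1)

/-- `E_{2,2}(τ) = 2E₂(2τ) - E₂(τ)`. -/
noncomputable def E₂₂ (τ : ℂ) : ℂ := 2 * E₂ (2 * τ) - E₂ τ

/-- `E_{2,4}(τ) = (4E₄(2τ) - E₄(τ))/3`. -/
noncomputable def E₂₄ (τ : ℂ) : ℂ := (4 * E₄ (2 * τ) - E₄ τ) / 3

/-- `E_{3,2}(τ) = (3E₂(3τ) - E₂(τ))/2`. -/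
noncomputable def E₃₂ (τ : ℂ) : ℂ := (3 * E₂ (3 * τ) - E₂ τ) / 2

/-- `E_{3,4}(τ) = (9E₄(3τ) - E₄(τ))/8`. -/
noncomputable def E₃₄ (τ : ℂ) : ℂ := (9 * E₄ (3 * τ) - E₄ τ) / 8

/-- `E_{4,2}(τ) = (4E₂(4τ) - E₂(τ))/3`. -/
noncomputable def E₄₂ (τ : ℂ) : ℂ := (4 * E₂ (4 * τ) - E₂ τ) / 3

/-- `E'_{4,2}(τ) = 4E₂(4τ) - 4E₂(2τ) + E₂(τ)`. -/
noncomputable def E₄₂' (τ : ℂ) : ℂ := 4 * E₂ (4 * τ) - 4 * E₂ (2 * τ) + E₂ τ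

/-- `f_{1,j}(τ) = 2E₂(τ) - ((3+(-1)ʲi√3)/6)E₂(τ/2) - ((3-(-1)ʲi√3)/6)E₂((τ+1)/2)`. -/
noncomputable def f₁ (j : ℕ) (τ : ℂ) : ℂ :=
  2 * E₂ τ - ((3 + (-1 : ℂ) ^ j * Complex.I * Real.sqrt 3) / 6) * E₂ (τ / 2)
    - ((3 - (-1 : ℂ) ^ j * Complex.I * Real.sqrt 3) / 6) * E₂ ((τ + 1) / 2)

/-- `g_{1,j}(τ) = (3/2)E₂(τ) - (1/4) Σ_{0≤m≤2, m≢j (mod 3)} E₂((τ+m)/3)`. -/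
noncomputable def g₁ (j : ℕ) (τ : ℂ) : ℂ :=
  (3 / 2) * E₂ τ -
    (1 / 4) * ∑ m ∈ (Finset.range 3).filter (fun m => ¬ m % 3 = j % 3), E₂ ((τ + m) / 3)

/-- `f_{2,j}(τ) = 4E_{1,-4}(τ) + (-1)ʲ·2i·(E_{1,-4}(τ/2) - E_{1,-4}((τ+1)/2))`. -/
noncomputable def f₂ (j : ℕ) (τ : ℂ) : ℂ :=
  4 * E₁₄ τ + (-1 : ℂ) ^ j * 2 * Complex.I * (E₁₄ (τ / 2) - E₁₄ ((τ + 1) / 2))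

/-- `f_{3,j}(τ) = 6E_{1,-3}(2τ) + (-1)ʲ·i√3·(E_{1,-3}(τ/2) - E_{1,-3}((τ+1)/2))`. -/
noncomputable def f₃ (j : ℕ) (τ : ℂ) : ℂ :=
  6 * E₁₃ (2 * τ) +
    (-1 : ℂ) ^ j * Complex.I * Real.sqrt 3 * (E₁₃ (τ / 2) - E₁₃ ((τ + 1) / 2))

/-- `f_{4,j}(τ) = θ(τ/2 - (-1)ʲ/4)`. -/
noncomputable def f₄ (j : ℕ) (τ : ℂ) : ℂ := θ (τ / 2 - (-1 : ℂ) ^ j / 4)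

/-- `g_{4,j}(τ) = 2θ(2τ)² - θ((τ+j)/2)²`. -/
noncomputable def g₄ (j : ℕ) (τ : ℂ) : ℂ := 2 * θ (2 * τ) ^ 2 - θ ((τ + j) / 2) ^ 2

/-- `E_{3,-3,1}(τ) = -1/9 + Σ_{n≥1} (Σ_{d∣n} d²χ₋₃(d)) qⁿ`. -/
noncomputable def E₃₃₁ (τ : ℂ) : ℂ :=
  -(1 / 9) + ∑' n : ℕ, (∑ d ∈ (n + 1).divisors, (d : ℂ) ^ 2 * χ₃ d) * qq τ ^ (n + 1)

/-- `E_{3,1,-3}(τ) = Σ_{n≥1} (Σ_{d∣n} d²χ₋₃(n/d)) qⁿ`. -/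
noncomputable def E₃₁₃ (τ : ℂ) : ℂ :=
  ∑' n : ℕ, (∑ d ∈ (n + 1).divisors, (d : ℂ) ^ 2 * χ₃ ((n + 1) / d)) * qq τ ^ (n + 1)

/-!
The function `F = E₃₂⁴ - E₃₄² - 108 (η(τ) η(3τ))⁶ E₃₂` satisfies `F(-1 / (3τ)) = 81 τ⁸ F(τ)`, and
its `q`-expansion vanishes to order at least `2` at the cusp. Hence `F³ / (η(τ) η(3τ))²⁴`, which is
holomorphic because `η` has no zeros, is invariant under `τ ↦ τ + 1` and `τ ↦ -1 / (3τ)` and tends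
to `0` at the cusp; by the maximum principle it is zero.

That `E₁₃² = E₃₂ / 36` is an identity of Lambert series. With `L n = qⁿ / (1 - qⁿ)`, the square of
`∑ χ₃(n) L n` is expanded through `L m * L n = L (m + n) * (1 + L m + L n)` and
`χ₃(m) χ₃(n) = [3 ∣ m - n] - [3 ∣ m + n]`.
-/

section Fricke

open Filter Topology
open UpperHalfPlane hiding I

lemma ne_zero_of_im_pos {z : ℂ} (hz : 0 < z.im) : z ≠ 0 := by
  rintro rfl
  simp at hz

lemma im_neg_one_div_mul (N : ℝ) (z : ℂ) : (-1 / (N * z)).im = z.im / (N * normSq z) := by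
  rw [neg_div, one_div, neg_im, inv_im, im_ofReal_mul, normSq_mul, normSq_ofReal]
  rcases eq_or_ne N 0 with rfl | hN
  · simp
  · field_simp

lemma im_le_mul_im_neg_one_div_mul {N ρ : ℝ} (hN : 0 < N) {z : ℂ} (hz : 0 < z.im)
    (h : N * normSq z ≤ ρ) : z.im ≤ ρ * (-1 / (N * z)).im := by
  have : 0 < normSq z := normSq_pos.2 (ne_zero_of_im_pos hz)
  rw [im_neg_one_div_mul, mul_div_assoc', le_div_iff₀ (by positivity), mul_comm ρ]
  gcongr

lemma normSq_le_of_abs_re_le_of_abs_im_le {a b : ℝ} {z : ℂ} (hre : |z.re| ≤ a) (him : |z.im| ≤ b) :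
    normSq z ≤ a ^ 2 + b ^ 2 := by
  rw [normSq_apply, ← pow_two, ← pow_two, ← sq_abs z.re, ← sq_abs z.im]
  gcongr

lemma exists_abs_re_le_half_of_periodic {α : Type*} {g : ℂ → α} (hT : Function.Periodic g 1)
    (z : ℂ) : ∃ w : ℂ, |w.re| ≤ 1 / 2 ∧ w.im = z.im ∧ g w = g z :=
  ⟨z - round z.re, by simpa using abs_sub_round z.re, by simp,
    by simpa using hT.sub_zsmul_eq (round z.re) (x := z)⟩

-- While `Im z < y₀` and `|Re z| ≤ 1 / 2`, the involution multiplies `Im z` by at least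
-- `8 / (N + 4) > 1`.
lemma exists_abs_re_le_half_and_le_im_of_fricke {N : ℝ} (hN : 0 < N) (hN4 : N < 4) :
    ∃ y₀ > 0, ∀ {α : Type*} {g : ℂ → α}, Function.Periodic g 1 →
      (∀ z : ℂ, 0 < z.im → g (-1 / (N * z)) = g z) →
      ∀ z : ℂ, 0 < z.im → ∃ w : ℂ, |w.re| ≤ 1 / 2 ∧ y₀ ≤ w.im ∧ g w = g z := by
  set ρ := (N + 4) / 8 with hρ
  set y₀ := √((4 - N) / (8 * N)) with hy₀
  have hy₀0 : 0 < y₀ := Real.sqrt_pos.2 (div_pos (by linarith) (by positivity))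
  have hNy₀ : N * y₀ ^ 2 = (4 - N) / 8 := by
    rw [hy₀, Real.sq_sqrt (div_nonneg (by linarith) (by positivity))]
    field_simp
  refine ⟨y₀, hy₀0, fun {α g} hT hW ↦ ?_⟩
  have descent (n : ℕ) : ∀ z : ℂ, y₀ * ρ ^ n ≤ z.im →
      ∃ w : ℂ, |w.re| ≤ 1 / 2 ∧ y₀ ≤ w.im ∧ g w = g z := by
    induction n with
    | zero =>
      intro z hz
      obtain ⟨w, hre, him, hg⟩ := exists_abs_re_le_half_of_periodic hT z
      exact ⟨w, hre, by simpa [him] using hz, hg⟩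
    | succ n ih =>
      intro z hz
      obtain ⟨w, hre, him, hg⟩ := exists_abs_re_le_half_of_periodic hT z
      rcases le_or_gt y₀ w.im with hw | hw
      · exact ⟨w, hre, hw, hg⟩
      have hw0 : 0 < w.im := him ▸ (by positivity : 0 < y₀ * ρ ^ (n + 1)).trans_le hz
      have hnorm : N * normSq w ≤ ρ := by
        have := normSq_le_of_abs_re_le_of_abs_im_le hre ((abs_of_pos hw0).trans_le hw.le)
        nlinarith
      have hstep : y₀ * ρ ^ n ≤ (-1 / (N * w)).im := by
        refine le_of_mul_le_mul_left ?_ (by positivity : 0 < ρ)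
        calc ρ * (y₀ * ρ ^ n) = y₀ * ρ ^ (n + 1) := by ring
          _ ≤ w.im := him ▸ hz
          _ ≤ ρ * (-1 / (N * w)).im := im_le_mul_im_neg_one_div_mul hN hw0 hnorm
      obtain ⟨v, hvre, hvim, hgv⟩ := ih _ hstep
      exact ⟨v, hvre, hvim, hgv.trans ((hW w hw0).trans hg)⟩
  intro z hz
  obtain ⟨n, hn⟩ := exists_pow_lt_of_lt_one (div_pos hz hy₀0) (show ρ < 1 by linarith)
  exact descent n z ((lt_div_iff₀' hy₀0).1 hn).le

lemma exists_im_bound_of_tendsto_zero {E : Type*} [NormedAddCommGroup E] {f : ℂ → E}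
    (hlim : Tendsto f (comap im atTop) (𝓝 0)) {ε : ℝ} (hε : 0 < ε) :
    ∃ B, ∀ w : ℂ, B ≤ w.im → ‖f w‖ < ε := by
  have := hlim.norm.eventually_lt_const (by rwa [norm_zero])
  obtain ⟨B, hB⟩ := eventually_atTop.1 (eventually_comap.1 this)
  exact ⟨B, fun w hw ↦ hB w.im hw w rfl⟩

lemma exists_isMaxOn_norm_of_fricke {E : Type*} [NormedAddCommGroup E] {N : ℝ} (hN : 0 < N)
    (hN4 : N < 4) {f : ℂ → E} (hf : ContinuousOn f upperHalfPlaneSet)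
    (hT : Function.Periodic (fun z ↦ ‖f z‖) 1)
    (hW : ∀ z : ℂ, 0 < z.im → ‖f (-1 / (N * z))‖ = ‖f z‖)
    (hlim : Tendsto f (comap im atTop) (𝓝 0)) {z : ℂ} (hz : 0 < z.im) (hfz : f z ≠ 0) :
    ∃ w ∈ upperHalfPlaneSet, IsMaxOn (norm ∘ f) upperHalfPlaneSet w := by
  obtain ⟨y₀, hy₀, hred⟩ := exists_abs_re_le_half_and_le_im_of_fricke hN hN4
  obtain ⟨B, hB⟩ := exists_im_bound_of_tendsto_zero hlim (norm_pos_iff.2 hfz)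
  set K : Set ℂ := Set.Icc (-(1 / 2)) (1 / 2) ×ℂ Set.Icc y₀ B
  have hK : IsCompact K := isCompact_Icc.reProdIm isCompact_Icc
  have hKH : K ⊆ upperHalfPlaneSet := fun w hw ↦ hy₀.trans_le hw.2.1
  have hmem {w : ℂ} (hre : |w.re| ≤ 1 / 2) (him : y₀ ≤ w.im) (hw : ‖f z‖ ≤ ‖f w‖) : w ∈ K :=
    ⟨abs_le.1 hre, him, le_of_not_ge fun h ↦ (hB w h).not_ge hw⟩
  obtain ⟨z', hre, him, hz'⟩ := hred hT hW z hz
  have hz'K := hmem hre him hz'.ge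
  obtain ⟨w, hwK, hmax⟩ := hK.exists_isMaxOn ⟨z', hz'K⟩ (hf.mono hKH).norm
  refine ⟨w, hKH hwK, fun v hv ↦ ?_⟩
  obtain ⟨v', hre, him, hv'⟩ := hred hT hW v hv
  rcases le_or_gt ‖f z‖ ‖f v'‖ with h | h
  · exact hv'.ge.trans (hmax (hmem hre him h))
  · exact hv'.ge.trans (h.le.trans (hz'.ge.trans (hmax hz'K)))

theorem eq_zero_of_fricke_of_tendsto_zero {E : Type*} [NormedAddCommGroup E] [NormedSpace ℂ E]
    {N : ℝ} (hN : 0 < N) (hN4 : N < 4) {f : ℂ → E}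
    (hf : DifferentiableOn ℂ f upperHalfPlaneSet) (hT : Function.Periodic (fun z ↦ ‖f z‖) 1)
    (hW : ∀ z : ℂ, 0 < z.im → ‖f (-1 / (N * z))‖ = ‖f z‖)
    (hlim : Tendsto f (comap im atTop) (𝓝 0)) {z : ℂ} (hz : 0 < z.im) : f z = 0 := by
  by_contra hfz
  obtain ⟨w, hw, hmax⟩ := exists_isMaxOn_norm_of_fricke hN hN4 hf.continuousOn hT hW hlim hz hfz
  have hconst : Set.EqOn (norm ∘ f) (Function.const ℂ ‖f w‖) upperHalfPlaneSet :=
    norm_eqOn_of_isPreconnected_of_isMaxOn (convex_halfSpace_im_gt 0).isPreconnected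
      isOpen_upperHalfPlaneSet hf hw hmax
  obtain ⟨B, hB⟩ := exists_im_bound_of_tendsto_zero hlim (norm_pos_iff.2 hfz)
  have him : ((max B 1 : ℝ) * I).im = max B 1 := by simp
  have hmem : 0 < ((max B 1 : ℝ) * I).im := him.symm ▸ zero_lt_one.trans_le (le_max_right B 1)
  exact (hB _ (him.symm ▸ le_max_left B 1)).ne ((hconst hmem).trans (hconst hz).symm)

end Fricke

section LevelOne

open scoped MatrixGroups
open UpperHalfPlane hiding I

lemma tsum_sigmaC_eq (k : ℕ) (q : ℂ) :
    ∑' n : ℕ, sigmaC k (n + 1) * q ^ (n + 1) =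
      ∑' n : ℕ+, (ArithmeticFunction.sigma k n : ℂ) * q ^ (n : ℕ) := by
  rw [tsum_pnat_eq_tsum_succ (f := fun n ↦ (ArithmeticFunction.sigma k n : ℂ) * q ^ n)]
  simp [sigmaC, ArithmeticFunction.sigma_apply]

lemma E₂_eq_E2 (z : ℍ) : E₂ z = EisensteinSeries.E2 z := by
  rw [E₂, tsum_sigmaC_eq, EisensteinSeries.E2_eq_tsum_cexp, qq]

lemma E₄_eq_modularForm (z : ℍ) : E₄ z = ModularForm.E₄ z := by
  rw [E₄, tsum_sigmaC_eq, EisensteinSeries.q_expansion_bernoulli _ ⟨2, rfl⟩, qq]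
  norm_num [bernoulli_eq_bernoulli'_of_ne_one, bernoulli'_four]

lemma η_eq_eta (z : ℂ) : η z = ModularForm.eta z := by
  rw [η, ModularForm.eta]
  congr 1
  · simp only [Function.Periodic.qParam]
    congr 1
    push_cast
    ring
  · simp only [ModularForm.eta_q_eq_pow, qq]

lemma E₂_neg_one_div {z : ℂ} (hz : 0 < z.im) :
    E₂ (-1 / z) = z ^ 2 * E₂ z - 6 * I * z / Real.pi := by
  lift z to ℍ using hz
  have h := congrFun (EisensteinSeries.E2_slash_action ModularGroup.S) z
  have hz0 : (z : ℂ) ≠ 0 := ne_zero z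
  have hpi : (Real.pi : ℂ) ≠ 0 := by simp [Real.pi_ne_zero]
  rw [ModularForm.SL_slash_apply, modular_S_smul, ModularGroup.denom_S, ← E₂_eq_E2, Pi.sub_apply,
    ← E₂_eq_E2, Pi.smul_apply, EisensteinSeries.D2_S, riemannZeta_two, smul_eq_mul, zpow_neg,
    zpow_ofNat] at h
  rw [show -1 / (z : ℂ) = (-(z : ℂ))⁻¹ by field_simp]
  field_simp at h ⊢
  linear_combination h

lemma E₄_neg_one_div {z : ℂ} (hz : 0 < z.im) : E₄ (-1 / z) = z ^ 4 * E₄ z := by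
  lift z to ℍ using hz
  have hz0 : (z : ℂ) ≠ 0 := ne_zero z
  have h := congrFun (SlashInvariantForm.slash_action_eqn ModularForm.E₄ _
    (⟨ModularGroup.S, rfl⟩ : (ModularGroup.S : GL (Fin 2) ℝ) ∈ 𝒮ℒ)) z
  rw [← ModularForm.SL_slash, ModularForm.SL_slash_apply, modular_S_smul, ModularGroup.denom_S,
    ← E₄_eq_modularForm, ← E₄_eq_modularForm, zpow_neg, zpow_ofNat] at h
  rw [show -1 / (z : ℂ) = (-(z : ℂ))⁻¹ by field_simp]
  field_simp at h ⊢
  linear_combination h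

lemma η_neg_one_div_sq {z : ℂ} (hz : 0 < z.im) : η (-1 / z) ^ 2 = -I * z * η z ^ 2 := by
  have h : η (-1 / z) = (sqrt I)⁻¹ * (sqrt z * η z) := by
    simpa [η_eq_eta] using ModularForm.eta_comp_eq_csqrt_I_inv (show z ∈ upperHalfPlaneSet from hz)
  have sq_sqrt (w : ℂ) : sqrt w ^ 2 = w := cpow_nat_inv_pow w two_ne_zero
  rw [h, mul_pow, mul_pow, inv_pow, sq_sqrt, sq_sqrt, inv_I, mul_assoc]

end LevelOne

section LevelThree

lemma three_mul_neg_one_div (z : ℂ) : 3 * (-1 / (3 * z)) = -1 / z := by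
  rcases eq_or_ne z 0 with rfl | hz
  · simp
  · field_simp

lemma E₃₂_fricke {z : ℂ} (hz : 0 < z.im) : E₃₂ (-1 / (3 * z)) = -3 * z ^ 2 * E₃₂ z := by
  rw [E₃₂, E₃₂, three_mul_neg_one_div, E₂_neg_one_div hz, E₂_neg_one_div (by simpa using hz)]
  ring

lemma E₃₄_fricke {z : ℂ} (hz : 0 < z.im) : E₃₄ (-1 / (3 * z)) = -9 * z ^ 4 * E₃₄ z := by
  rw [E₃₄, E₃₄, three_mul_neg_one_div, E₄_neg_one_div hz, E₄_neg_one_div (by simpa using hz)]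
  ring

lemma η_mul_η_fricke {z : ℂ} (hz : 0 < z.im) :
    (η (-1 / (3 * z)) * η (3 * (-1 / (3 * z)))) ^ 6 = -27 * z ^ 6 * (η z * η (3 * z)) ^ 6 := by
  have hsq : (η (-1 / (3 * z)) * η (3 * (-1 / (3 * z)))) ^ 2 =
      -3 * z ^ 2 * (η z * η (3 * z)) ^ 2 := by
    rw [three_mul_neg_one_div, mul_pow, η_neg_one_div_sq hz,
      η_neg_one_div_sq (by simpa using hz)]
    linear_combination 3 * z ^ 2 * (η z * η (3 * z)) ^ 2 * I_sq
  calc (η (-1 / (3 * z)) * η (3 * (-1 / (3 * z)))) ^ 6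
      = ((η (-1 / (3 * z)) * η (3 * (-1 / (3 * z)))) ^ 2) ^ 3 := by ring
    _ = -27 * z ^ 6 * (η z * η (3 * z)) ^ 6 := by rw [hsq]; ring

lemma η_mul_η_ne_zero {z : ℂ} (hz : 0 < z.im) : η z * η (3 * z) ≠ 0 := by
  rw [η_eq_eta, η_eq_eta]
  exact mul_ne_zero (ModularForm.eta_ne_zero hz) (ModularForm.eta_ne_zero (by simpa using hz))

end LevelThree

section QExpansion

open Asymptotics Filter Topology
open UpperHalfPlane hiding I

lemma norm_qq_lt_one {z : ℂ} (hz : 0 < z.im) : ‖qq z‖ < 1 :=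
  norm_exp_two_pi_I_lt_one ⟨z, hz⟩

lemma qq_eq_qParam (z : ℂ) : qq z = Function.Periodic.qParam 1 z := by
  simp [qq, Function.Periodic.qParam]

lemma periodic_qq : Function.Periodic qq 1 := fun z ↦ by
  rw [qq, qq, mul_add, mul_one, exp_periodic]

lemma qq_natCast_mul (n : ℕ) (z : ℂ) : qq (n * z) = qq z ^ n := by
  rw [qq, qq, ← exp_nat_mul]
  ring_nf

lemma qq_three_mul (z : ℂ) : qq (3 * z) = qq z ^ 3 := mod_cast qq_natCast_mul 3 z

lemma tendsto_qq : Tendsto qq (comap im atTop) (𝓝[≠] 0) := by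
  rw [funext qq_eq_qParam]
  exact Function.Periodic.qParam_tendsto one_pos

lemma differentiableOn_comp_qq {f : ℂ → ℂ} (hf : DifferentiableOn ℂ f (Metric.ball 0 1)) :
    DifferentiableOn ℂ (fun z ↦ f (qq z)) upperHalfPlaneSet := by
  refine hf.comp (Differentiable.differentiableOn ?_) fun z hz ↦ by simpa using norm_qq_lt_one hz
  unfold qq
  fun_prop

lemma differentiableOn_tsum_mul_pow {a : ℕ → ℂ} {k : ℕ}
    (ha : a =O[atTop] fun n ↦ ((n ^ k : ℕ) : ℂ)) :
    DifferentiableOn ℂ (fun q ↦ ∑' n, a n * q ^ n) (Metric.ball 0 1) := by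
  intro q hq
  obtain ⟨r, hqr, hr⟩ := exists_between (mem_ball_zero_iff.1 hq)
  have hr0 : 0 ≤ r := (norm_nonneg q).trans hqr.le
  have hsum : Summable fun n ↦ ‖a n * (r : ℂ) ^ n‖ :=
    summable_norm_mul_geometric_of_norm_lt_one' (by simpa [abs_of_nonneg hr0]) ha
  have hdiff : DifferentiableOn ℂ (fun q ↦ ∑' n, a n * q ^ n) (Metric.ball 0 r) := by
    refine differentiableOn_tsum_of_summable_norm hsum (fun n ↦ by fun_prop) Metric.isOpen_ball
      fun n w hw ↦ ?_
    rw [norm_mul, norm_mul, norm_pow, norm_pow, norm_real, Real.norm_of_nonneg hr0]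
    gcongr
    exact (mem_ball_zero_iff.1 hw).le
  exact (hdiff.differentiableAt
    (Metric.isOpen_ball.mem_nhds (mem_ball_zero_iff.2 hqr))).differentiableWithinAt

/-- The power series `∑ σₖ(n + 1) qⁿ`, so that `q * sigmaSeries k q` is the series occurring in
`E₂` (`k = 1`) and in `E₄` (`k = 3`). -/
noncomputable def sigmaSeries (k : ℕ) (q : ℂ) : ℂ := ∑' n : ℕ, sigmaC k (n + 1) * q ^ n

lemma tsum_sigmaC_mul_pow_succ (k : ℕ) (q : ℂ) :
    ∑' n : ℕ, sigmaC k (n + 1) * q ^ (n + 1) = q * sigmaSeries k q := by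
  rw [sigmaSeries, ← tsum_mul_left]
  simp only [pow_succ', mul_left_comm]

lemma sigmaSeries_zero (k : ℕ) : sigmaSeries k 0 = 1 := by
  rw [sigmaSeries, tsum_eq_single 0 (by intro n hn; simp [hn])]
  simp [sigmaC]

lemma norm_sigmaC_le (k n : ℕ) : ‖sigmaC k n‖ ≤ (n : ℝ) ^ (k + 1) := by
  have h := ArithmeticFunction.sigma_le_pow_succ k n
  rw [ArithmeticFunction.sigma_apply] at h
  refine (norm_sum_le _ _).trans ?_
  simp only [norm_pow, norm_natCast]
  exact_mod_cast h

lemma differentiableOn_sigmaSeries (k : ℕ) :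
    DifferentiableOn ℂ (sigmaSeries k) (Metric.ball 0 1) := by
  refine differentiableOn_tsum_mul_pow (k := k + 1) (IsBigO.of_bound (2 ^ (k + 1)) ?_)
  filter_upwards [eventually_ge_atTop 1] with n hn
  calc ‖sigmaC k (n + 1)‖ ≤ ((n + 1 : ℕ) : ℝ) ^ (k + 1) := norm_sigmaC_le k (n + 1)
    _ ≤ (2 * n : ℝ) ^ (k + 1) := by gcongr; exact_mod_cast (by omega : n + 1 ≤ 2 * n)
    _ = 2 ^ (k + 1) * ‖((n ^ (k + 1) : ℕ) : ℂ)‖ := by simp [mul_pow]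

lemma differentiableOn_comp_pow {f : ℂ → ℂ} (hf : DifferentiableOn ℂ f (Metric.ball 0 1))
    {n : ℕ} (hn : n ≠ 0) : DifferentiableOn ℂ (fun q ↦ f (q ^ n)) (Metric.ball 0 1) := by
  refine hf.comp (by fun_prop) fun q hq ↦ ?_
  rw [mem_ball_zero_iff] at hq ⊢
  simpa using pow_lt_one₀ (norm_nonneg q) hq hn

/-- The power series `(E₃₂ - 1) / q`. -/
noncomputable def levelThreeX (q : ℂ) : ℂ :=
  12 * sigmaSeries 1 q - 36 * q ^ 2 * sigmaSeries 1 (q ^ 3)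

/-- The power series `(E₃₄ - 1) / q`. -/
noncomputable def levelThreeY (q : ℂ) : ℂ :=
  270 * q ^ 2 * sigmaSeries 3 (q ^ 3) - 30 * sigmaSeries 3 q

/-- The power series `(η(τ) η(3τ))⁶ / q`. -/
noncomputable def levelThreeP (q : ℂ) : ℂ :=
  ((∏' n : ℕ, (1 - q ^ (n + 1))) * ∏' n : ℕ, (1 - (q ^ 3) ^ (n + 1))) ^ 6

lemma E₃₂_eq_levelThreeX (z : ℂ) : E₃₂ z = 1 + qq z * levelThreeX (qq z) := by
  rw [E₃₂, E₂, E₂, levelThreeX, tsum_sigmaC_mul_pow_succ, tsum_sigmaC_mul_pow_succ,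
    qq_three_mul]
  ring

lemma E₃₄_eq_levelThreeY (z : ℂ) : E₃₄ z = 1 + qq z * levelThreeY (qq z) := by
  rw [E₃₄, E₄, E₄, levelThreeY, tsum_sigmaC_mul_pow_succ, tsum_sigmaC_mul_pow_succ,
    qq_three_mul]
  ring

lemma η_mul_η_pow_six (z : ℂ) : (η z * η (3 * z)) ^ 6 = qq z * levelThreeP (qq z) := by
  have h : (exp (Real.pi * I * z / 12) * exp (Real.pi * I * (3 * z) / 12)) ^ 6 = qq z := by
    rw [← exp_add, ← exp_nat_mul, qq]
    push_cast
    ring_nf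
  rw [η, η, levelThreeP, qq_three_mul,
    mul_mul_mul_comm, mul_pow, h]

lemma differentiableOn_levelThreeX : DifferentiableOn ℂ levelThreeX (Metric.ball 0 1) := by
  have h := differentiableOn_sigmaSeries 1
  have h3 := differentiableOn_comp_pow h three_ne_zero
  unfold levelThreeX
  fun_prop

lemma differentiableOn_levelThreeY : DifferentiableOn ℂ levelThreeY (Metric.ball 0 1) := by
  have h := differentiableOn_sigmaSeries 3
  have h3 := differentiableOn_comp_pow h three_ne_zero
  unfold levelThreeY
  fun_prop

lemma differentiableOn_levelThreeP : DifferentiableOn ℂ levelThreeP (Metric.ball 0 1) := by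
  have h := ModularForm.differentiableOn_tprod_one_sub_pow
  exact (h.mul (differentiableOn_comp_pow h three_ne_zero)).pow 6

lemma levelThreeP_zero : levelThreeP 0 = 1 := by simp [levelThreeP]

lemma tendsto_mul_pow_three_div_mul_pow_four {𝕜 : Type*} [NontriviallyNormedField 𝕜] {R P : 𝕜 → 𝕜}
    (hR : DifferentiableAt 𝕜 R 0) (hR0 : R 0 = 0) (hP : ContinuousAt P 0) (hP0 : P 0 ≠ 0) :
    Tendsto (fun q ↦ (q * R q) ^ 3 / (q * P q) ^ 4) (𝓝[≠] 0) (𝓝 0) := by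
  have h : Tendsto (fun q ↦ dslope R 0 q * R q ^ 2 / P q ^ 4) (𝓝[≠] 0) (𝓝 0) := by
    have : ContinuousAt (fun q ↦ dslope R 0 q * R q ^ 2 / P q ^ 4) 0 :=
      ((continuousAt_dslope_same.2 hR).mul (hR.continuousAt.pow 2)).div (hP.pow 4)
        (pow_ne_zero 4 hP0)
    simpa [hR0] using this.tendsto.mono_left nhdsWithin_le_nhds
  refine h.congr' (eventually_nhdsWithin_of_forall fun q (hq : q ≠ 0) ↦ ?_)
  have hslope : dslope R 0 q = R q / q :=
    eq_div_of_mul_eq hq (by simpa [hR0, mul_comm] using sub_smul_dslope R 0 q)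
  rw [hslope]
  field_simp

-- At the cusp `F³` is divisible by `q⁶`, but `(η(τ) η(3τ))²⁴` only by `q⁴`.
theorem eq_zero_of_fricke_weight_eight {F R : ℂ → ℂ}
    (hR : DifferentiableOn ℂ R (Metric.ball 0 1)) (hR0 : R 0 = 0)
    (hFR : ∀ z, F z = qq z * R (qq z))
    (hW : ∀ z : ℂ, 0 < z.im → F (-1 / (3 * z)) = 81 * z ^ 8 * F z) {z : ℂ} (hz : 0 < z.im) :
    F z = 0 := by
  obtain ⟨G, hG⟩ : ∃ G : ℂ → ℂ, ∀ z, G z = (η z * η (3 * z)) ^ 6 := ⟨_, fun _ ↦ rfl⟩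
  have hGP (z : ℂ) : G z = qq z * levelThreeP (qq z) := (hG z).trans (η_mul_η_pow_six z)
  have hG0 {z : ℂ} (hz : 0 < z.im) : G z ≠ 0 := hG z ▸ pow_ne_zero 6 (η_mul_η_ne_zero hz)
  have hGW {z : ℂ} (hz : 0 < z.im) : G (-1 / (3 * z)) = -27 * z ^ 6 * G z := by
    rw [hG, hG, η_mul_η_fricke hz]
  have hF : DifferentiableOn ℂ F upperHalfPlaneSet := by
    rw [funext hFR]
    exact differentiableOn_comp_qq (differentiableOn_id.mul hR)
  have hG' : DifferentiableOn ℂ G upperHalfPlaneSet := by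
    rw [funext hGP]
    exact differentiableOn_comp_qq (differentiableOn_id.mul differentiableOn_levelThreeP)
  have hlim : Tendsto (fun z ↦ F z ^ 3 / G z ^ 4) (comap im atTop) (𝓝 0) := by
    have hball := Metric.ball_mem_nhds (0 : ℂ) one_pos
    simp only [hFR, hGP]
    exact (tendsto_mul_pow_three_div_mul_pow_four (hR.differentiableAt hball) hR0
      (differentiableOn_levelThreeP.differentiableAt hball).continuousAt
      (by simp [levelThreeP_zero])).comp tendsto_qq
  have hzero : F z ^ 3 / G z ^ 4 = 0 := by
    refine eq_zero_of_fricke_of_tendsto_zero (N := 3) (f := fun z ↦ F z ^ 3 / G z ^ 4) three_pos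
      (by norm_num) ((hF.pow 3).div (hG'.pow 4) fun z hz ↦ pow_ne_zero 4 (hG0 hz)) (fun z ↦ ?_)
      (fun z hz ↦ ?_) hlim hz
    · simp only [hFR, hGP, periodic_qq z]
    · have hz0 := ne_zero_of_im_pos hz
      simp only [ofReal_ofNat, hW z hz, hGW hz]
      have := hG0 hz
      congr 1
      field_simp
      ring
  simpa [hG0 hz] using hzero

theorem E₃₂_pow_four_sub_E₃₄_sq {z : ℂ} (hz : 0 < z.im) :
    E₃₂ z ^ 4 - E₃₄ z ^ 2 = 108 * (η z * η (3 * z)) ^ 6 * E₃₂ z := by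
  set x := levelThreeX
  set y := levelThreeY
  set P := levelThreeP
  refine sub_eq_zero.1 (eq_zero_of_fricke_weight_eight
    (F := fun z ↦ E₃₂ z ^ 4 - E₃₄ z ^ 2 - 108 * (η z * η (3 * z)) ^ 6 * E₃₂ z)
    (R := fun q ↦ 4 * x q + 6 * q * x q ^ 2 + 4 * q ^ 2 * x q ^ 3 + q ^ 3 * x q ^ 4 - 2 * y q
      - q * y q ^ 2 - 108 * P q * (1 + q * x q)) ?_ ?_ (fun z ↦ ?_) (fun z hz ↦ ?_) hz)
  · have := differentiableOn_levelThreeX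
    have := differentiableOn_levelThreeY
    have := differentiableOn_levelThreeP
    fun_prop
  · norm_num [x, y, P, levelThreeX, levelThreeY, levelThreeP_zero, sigmaSeries_zero]
  · simp only [E₃₂_eq_levelThreeX, E₃₄_eq_levelThreeY, η_mul_η_pow_six]
    ring
  · simp only [E₃₂_fricke hz, E₃₄_fricke hz, η_mul_η_fricke hz]
    ring

end QExpansion

section PairSums

open Finset

lemma hasSum_sum_antidiagonal {E : Type*} [AddCommMonoid E] [TopologicalSpace E] [ContinuousAdd E]
    [RegularSpace E] {f : ℕ × ℕ → E} {s : E} (hf : HasSum f s) :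
    HasSum (fun n ↦ ∑ p ∈ antidiagonal n, f p) s := by
  refine ((Equiv.hasSum_iff HasAntidiagonal.sigmaAntidiagonalEquivProd).2 hf).sigma fun n ↦ ?_
  rw [← sum_coe_sort]
  exact hasSum_fintype _

lemma injective_pair_add_succ : Function.Injective fun p : ℕ × ℕ ↦ (p.2, p.2 + p.1 + 1) := by
  rintro ⟨a, b⟩ ⟨c, d⟩ h
  simp only [Prod.mk.injEq] at h ⊢
  omega

lemma tsum_indicator_fst_lt_snd {E : Type*} [AddCommMonoid E] [TopologicalSpace E]
    (f : ℕ × ℕ → E) :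
    ∑' p, {p : ℕ × ℕ | p.1 < p.2}.indicator f p = ∑' p : ℕ × ℕ, f (p.2, p.2 + p.1 + 1) := by
  rw [← injective_pair_add_succ.tsum_eq]
  · exact tsum_congr fun p ↦ Set.indicator_of_mem (by simp only [Set.mem_ofPred_eq]; omega) f
  · refine Set.support_indicator_subset.trans ?_
    rintro ⟨m, n⟩ (h : m < n)
    exact ⟨(n - m - 1, m), by simp only [Prod.mk.injEq, true_and]; omega⟩

lemma tsum_indicator_fst_eq_snd {E : Type*} [AddCommMonoid E] [TopologicalSpace E]
    (f : ℕ × ℕ → E) :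
    ∑' p, {p : ℕ × ℕ | p.1 = p.2}.indicator f p = ∑' n, f (n, n) := by
  have hinj : Function.Injective fun n : ℕ ↦ (n, n) := fun _ _ h ↦ (Prod.mk.inj h).1
  rw [← hinj.tsum_eq]
  · exact tsum_congr fun n ↦ Set.indicator_of_mem (by rfl) f
  · refine Set.support_indicator_subset.trans ?_
    rintro ⟨m, n⟩ (rfl : m = n)
    exact ⟨m, rfl⟩

lemma tsum_eq_tsum_diagonal_add_two_nsmul {E : Type*} [AddCommGroup E] [UniformSpace E]
    [IsUniformAddGroup E] [CompleteSpace E] [T2Space E] {f : ℕ × ℕ → E} (hf : Summable f)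
    (hsymm : ∀ m n, f (m, n) = f (n, m)) :
    ∑' p, f p = ∑' n, f (n, n) + 2 • ∑' p : ℕ × ℕ, f (p.2, p.2 + p.1 + 1) := by
  have hgt : ∑' p, {p : ℕ × ℕ | p.2 < p.1}.indicator f p =
      ∑' p, {p : ℕ × ℕ | p.1 < p.2}.indicator f p := by
    rw [← (Equiv.prodComm ℕ ℕ).tsum_eq]
    refine tsum_congr fun ⟨m, n⟩ ↦ ?_
    by_cases h : m < n <;> simp [h, hsymm m n]
  rw [← tsum_indicator_fst_lt_snd, two_nsmul]
  nth_rw 2 [← hgt]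
  rw [← tsum_indicator_fst_eq_snd, ← (hf.indicator _).tsum_add (hf.indicator _),
    ← (hf.indicator _).tsum_add ((hf.indicator _).add (hf.indicator _))]
  refine tsum_congr fun ⟨m, n⟩ ↦ ?_
  rcases lt_trichotomy m n with h | rfl | h
  · simp [h, h.ne, h.not_gt]
  · simp
  · simp [h, h.ne', h.not_gt]

end PairSums

section Lambert

open Finset

variable {𝕜 : Type*} [NormedField 𝕜] {q : 𝕜}

/-- The term `qⁿ / (1 - qⁿ)` of a Lambert series, which takes the junk value `0` at `n = 0`. -/
def lambert (q : 𝕜) (n : ℕ) : 𝕜 := q ^ n / (1 - q ^ n)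

lemma lambert_mul (q : 𝕜) (m n : ℕ) : lambert q (m * n) = lambert (q ^ m) n := by
  rw [lambert, lambert, pow_mul]

lemma norm_pow_lt_one_of_ne_zero (hq : ‖q‖ < 1) {n : ℕ} (hn : n ≠ 0) : ‖q ^ n‖ < 1 := by
  rw [norm_pow]
  exact pow_lt_one₀ (norm_nonneg q) hq hn

lemma one_sub_pow_ne_zero (hq : ‖q‖ < 1) {n : ℕ} (hn : n ≠ 0) : 1 - q ^ n ≠ 0 := fun h ↦
  (norm_pow_lt_one_of_ne_zero hq hn).ne (by rw [← sub_eq_zero.1 h, norm_one])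

lemma lambert_mul_lambert (hq : ‖q‖ < 1) {m n : ℕ} (hm : m ≠ 0) (hn : n ≠ 0) :
    lambert q m * lambert q n = lambert q (m + n) * (1 + lambert q m + lambert q n) := by
  have hm' := one_sub_pow_ne_zero hq hm
  have hn' := one_sub_pow_ne_zero hq hn
  have hmn := one_sub_pow_ne_zero hq (n := m + n) (by omega)
  unfold lambert
  rw [pow_add] at hmn ⊢
  field_simp
  ring

lemma norm_lambert_le (hq : ‖q‖ < 1) (n : ℕ) : ‖lambert q n‖ ≤ (1 - ‖q‖)⁻¹ * ‖q‖ ^ n := by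
  rcases eq_or_ne n 0 with rfl | hn
  · simpa [lambert] using hq.le
  have := sub_pos.2 hq
  have hden : 1 - ‖q‖ ≤ ‖1 - q ^ n‖ := calc
    1 - ‖q‖ ≤ 1 - ‖q‖ ^ n := sub_le_sub_left (pow_le_of_le_one (norm_nonneg q) hq.le hn) 1
    _ ≤ ‖1 - q ^ n‖ := by simpa using norm_sub_norm_le (1 : 𝕜) (q ^ n)
  rw [lambert, norm_div, norm_pow, div_eq_inv_mul]
  gcongr

lemma summable_norm_lambert (hq : ‖q‖ < 1) : Summable fun n ↦ ‖lambert q n‖ :=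
  .of_nonneg_of_le (fun _ ↦ norm_nonneg _) (norm_lambert_le hq)
    ((summable_geometric_of_lt_one (norm_nonneg q) hq).mul_left _)

lemma summable_norm_lambert_succ (hq : ‖q‖ < 1) : Summable fun n ↦ ‖lambert q (n + 1)‖ :=
  (summable_nat_add_iff 1).2 (summable_norm_lambert hq)

lemma sum_antidiagonal_lambert_mul_lambert (hq : ‖q‖ < 1) (n : ℕ) :
    ∑ p ∈ antidiagonal n, lambert q (p.1 + 1) * lambert q (p.2 + 1) =
      lambert q (n + 2) * (n + 1 + 2 * ∑ k ∈ range (n + 1), lambert q (k + 1)) := by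
  have hmul : ∀ p ∈ antidiagonal n, lambert q (p.1 + 1) * lambert q (p.2 + 1) =
      lambert q (n + 2) * (1 + lambert q (p.1 + 1) + lambert q (p.2 + 1)) := by
    rintro ⟨i, j⟩ hp
    obtain rfl := mem_antidiagonal.1 hp
    rw [lambert_mul_lambert hq i.succ_ne_zero j.succ_ne_zero, Nat.succ_add_eq_add_succ]
    rfl
  have hfst : ∑ p ∈ antidiagonal n, lambert q (p.1 + 1) =
      ∑ k ∈ range (n + 1), lambert q (k + 1) :=
    Nat.sum_antidiagonal_eq_sum_range_succ_mk _ n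
  have hsnd : ∑ p ∈ antidiagonal n, lambert q (p.2 + 1) =
      ∑ k ∈ range (n + 1), lambert q (k + 1) := by
    rw [← hfst, ← Nat.sum_antidiagonal_swap]
    rfl
  rw [sum_congr rfl hmul, ← mul_sum, sum_add_distrib, sum_add_distrib, hfst, hsnd, sum_const,
    Nat.card_antidiagonal, nsmul_one]
  push_cast
  ring

variable [CompleteSpace 𝕜]

lemma summable_lambert_succ (hq : ‖q‖ < 1) : Summable fun n ↦ lambert q (n + 1) :=
  (summable_norm_lambert_succ hq).of_norm

lemma summable_lambert_add (hq : ‖q‖ < 1) (d : ℕ) : Summable fun n ↦ lambert q (n + d) :=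
  (summable_nat_add_iff d).2 (summable_norm_lambert hq).of_norm

lemma hasSum_lambert_mul_lambert_add (hq : ‖q‖ < 1) (d : ℕ) :
    HasSum (fun n ↦ lambert q (n + 1) * lambert q (n + d + 2))
      (lambert q (d + 1) * ∑ k ∈ range (d + 1), lambert q (k + 1) -
        ∑' n, lambert q (n + d + 2)) := by
  have h := summable_lambert_succ hq
  have htail : Summable fun n ↦ lambert q (n + d + 2) := summable_lambert_add hq (d + 2)
  rw [eq_sub_of_add_eq (h.sum_add_tsum_nat_add (d + 1))]
  refine (((h.hasSum.sub htail.hasSum).mul_left (lambert q (d + 1))).sub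
    htail.hasSum).congr_fun fun n ↦ ?_
  have hmul := lambert_mul_lambert hq n.succ_ne_zero d.succ_ne_zero
  rw [show n + 1 + (d + 1) = n + d + 2 by ring] at hmul
  linear_combination -hmul

lemma summable_mul_lambert_mul_lambert (hq : ‖q‖ < 1) {c : ℕ × ℕ → 𝕜} {C : ℝ}
    (hc : ∀ p, ‖c p‖ ≤ C) :
    Summable fun p : ℕ × ℕ ↦ c p * (lambert q (p.1 + 1) * lambert q (p.2 + 1)) := by
  have h := summable_norm_lambert_succ hq
  refine .of_norm_bounded ((h.mul_of_nonneg h (fun _ ↦ norm_nonneg _)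
    fun _ ↦ norm_nonneg _).mul_left C) fun p ↦ ?_
  rw [norm_mul, norm_mul]
  gcongr
  exact hc p

lemma hasSum_mul_lambert_mul_antidiagonal (hq : ‖q‖ < 1) {c : ℕ → 𝕜} {C : ℝ}
    (hc : ∀ n, ‖c n‖ ≤ C) :
    HasSum (fun n : ℕ ↦ c (n + 1) *
        (lambert q (n + 1) * (n + 2 * ∑ k ∈ range n, lambert q (k + 1))))
      (∑' p : ℕ × ℕ, c (p.1 + p.2 + 2) * (lambert q (p.1 + 1) * lambert q (p.2 + 1))) := by
  have h := hasSum_sum_antidiagonal (summable_mul_lambert_mul_lambert hq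
    (c := fun p ↦ c (p.1 + p.2 + 2)) fun p ↦ hc _).hasSum
  rw [← hasSum_nat_add_iff' 1, sum_range_one, Nat.cast_zero, sum_range_zero, mul_zero, add_zero,
    mul_zero, mul_zero, sub_zero]
  refine h.congr_fun fun n ↦ ?_
  rw [Nat.cast_add_one, ← sum_antidiagonal_lambert_mul_lambert hq, mul_sum]
  exact sum_congr rfl fun p hp ↦ by rw [mem_antidiagonal.1 hp]

lemma hasSum_mul_tsum_lambert_add_sub (hq : ‖q‖ < 1) {c : ℕ → 𝕜} {C : ℝ} (hc : ∀ n, ‖c n‖ ≤ C) :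
    HasSum (fun n ↦ c (n + 1) * (∑' k, lambert q (k + n + 2)) -
      (∑ d ∈ range n, c (d + 1)) * lambert q (n + 1)) 0 := by
  have hgeom := summable_geometric_of_lt_one (norm_nonneg q) hq
  have hsum : Summable fun p : ℕ × ℕ ↦ c (p.1 + 1) * lambert q (p.2 + p.1 + 2) := by
    refine .of_norm_bounded ((summable_mul_of_summable_norm hgeom.norm hgeom.norm).mul_left
      (C * ((1 - ‖q‖)⁻¹ * ‖q‖ ^ 2))) fun p ↦ ?_
    calc ‖c (p.1 + 1) * lambert q (p.2 + p.1 + 2)‖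
        ≤ C * ((1 - ‖q‖)⁻¹ * ‖q‖ ^ (p.2 + p.1 + 2)) := by
          rw [norm_mul]
          exact mul_le_mul (hc _) (norm_lambert_le hq _) (norm_nonneg _)
            ((norm_nonneg _).trans (hc 0))
      _ = C * ((1 - ‖q‖)⁻¹ * ‖q‖ ^ 2) * (‖q‖ ^ p.1 * ‖q‖ ^ p.2) := by ring
  have hcount : HasSum (fun n ↦ (∑ d ∈ range n, c (d + 1)) * lambert q (n + 1))
      (∑' p : ℕ × ℕ, c (p.1 + 1) * lambert q (p.2 + p.1 + 2)) := by
    rw [← hasSum_nat_add_iff' 1, sum_range_one, sum_range_zero, zero_mul, sub_zero]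
    refine (hasSum_sum_antidiagonal hsum.hasSum).congr_fun fun n ↦ ?_
    rw [Nat.sum_antidiagonal_eq_sum_range_succ_mk, sum_mul]
    exact sum_congr rfl fun d hd ↦ by
      rw [Nat.sub_add_cancel (mem_range_succ_iff.1 hd)]
  have hfiber := hsum.hasSum.prod_fiberwise fun d ↦
    (summable_lambert_add hq (d + 2)).hasSum.mul_left (c (d + 1))
  simpa only [sub_self, add_assoc] using hfiber.sub hcount

lemma hasSum_lambert_mul_lambert_dist_sub_add (hq : ‖q‖ < 1) {c : ℕ → 𝕜} {C : ℝ}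
    (hc : ∀ n, ‖c n‖ ≤ C) :
    HasSum (fun n : ℕ ↦ (c 0 + 2 * c (n + 1)) * lambert q (n + 1) ^ 2 -
        (n * c (n + 1) + 2 * ∑ d ∈ range n, c (d + 1)) * lambert q (n + 1))
      (∑' p : ℕ × ℕ, (c (p.1.dist p.2) - c (p.1 + p.2 + 2)) *
        (lambert q (p.1 + 1) * lambert q (p.2 + 1))) := by
  have hdist := summable_mul_lambert_mul_lambert hq (c := fun p ↦ c (p.1.dist p.2)) fun _ ↦ hc _
  have hadd := summable_mul_lambert_mul_lambert hq (c := fun p ↦ c (p.1 + p.2 + 2)) fun _ ↦ hc _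
  have hoff (p : ℕ × ℕ) : p.2.dist (p.2 + p.1 + 1) = p.1 + 1 := by
    rw [Nat.dist_eq_sub_of_le] <;> omega
  have hsymm := tsum_eq_tsum_diagonal_add_two_nsmul hdist fun m n ↦ by
    simp only [Nat.dist_comm m n, mul_comm (lambert q (m + 1))]
  have hdiag := hdist.comp_injective (i := fun n : ℕ ↦ (n, n)) fun _ _ h ↦ (Prod.mk.inj h).1
  have hupper := hdist.comp_injective injective_pair_add_succ
  simp only [Function.comp_def, hoff, Nat.dist_self] at hsymm hdiag hupper
  have hfiber := hupper.hasSum.prod_fiberwise fun d ↦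
    (hasSum_lambert_mul_lambert_add hq d).mul_left (c (d + 1))
  simp only [sub_mul]
  rw [hdist.tsum_sub hadd, hsymm, nsmul_eq_mul, Nat.cast_ofNat]
  have h := ((hdiag.hasSum.add (hfiber.mul_left 2)).sub
    (hasSum_mul_lambert_mul_antidiagonal hq hc)).add
    ((hasSum_mul_tsum_lambert_add_sub hq hc).mul_left 2)
  rw [mul_zero, add_zero] at h
  refine h.congr_fun fun n ↦ ?_
  rw [sum_range_succ]
  ring

end Lambert

section Divisors

variable {𝕜 : Type*} [NontriviallyNormedField 𝕜] [CompleteSpace 𝕜] {q : 𝕜}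

lemma tsum_mul_pow_mul_eq_tsum_sum_divisors {a : ℕ → 𝕜}
    (ha : Summable fun c : ℕ+ × ℕ+ ↦ a c.1 * q ^ (c.1 * c.2 : ℕ)) :
    ∑' c : ℕ+ × ℕ+, a c.1 * q ^ (c.1 * c.2 : ℕ) =
      ∑' n : ℕ, (∑ d ∈ (n + 1).divisors, a d) * q ^ (n + 1) := by
  have hsigma := (sigmaAntidiagonalEquivProd.summable_iff.2 ha).tsum_sigma
  simp only [Function.comp_apply] at hsigma
  rw [← tsum_pnat_eq_tsum_succ (f := fun n ↦ (∑ d ∈ n.divisors, a d) * q ^ n),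
    ← sigmaAntidiagonalEquivProd.tsum_eq, hsigma]
  refine tsum_congr fun n ↦ ?_
  rw [tsum_fintype, Finset.sum_mul, ← Nat.sum_divisorsAntidiagonal (fun d _ ↦ a d * q ^ (n : ℕ)),
    ← Finset.sum_coe_sort (n : ℕ).divisorsAntidiagonal]
  refine Finset.sum_congr rfl fun p _ ↦ ?_
  change a p.1.1 * q ^ (p.1.1 * p.1.2) = _
  rw [(Nat.mem_divisorsAntidiagonal.1 p.2).1]

lemma hasSum_mul_lambert (hq : ‖q‖ < 1) {a : ℕ → 𝕜}
    (ha : Summable fun c : ℕ+ × ℕ+ ↦ a c.1 * q ^ (c.1 * c.2 : ℕ)) :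
    HasSum (fun n ↦ a (n + 1) * lambert q (n + 1))
      (∑' n : ℕ, (∑ d ∈ (n + 1).divisors, a d) * q ^ (n + 1)) := by
  rw [← tsum_mul_pow_mul_eq_tsum_sum_divisors ha,
    ← hasSum_pnat_iff_hasSum_succ (f := fun n ↦ a n * lambert q n)]
  refine ha.hasSum.prod_fiberwise fun d ↦ ?_
  have hgeom := hasSum_geometric_of_norm_lt_one (norm_pow_lt_one_of_ne_zero hq d.ne_zero)
  rw [hasSum_pnat_iff_hasSum_succ (f := fun m ↦ a d * q ^ (d * m : ℕ))]
  simpa only [pow_mul, pow_succ', lambert, div_eq_mul_inv] using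
    (hgeom.mul_left (q ^ (d : ℕ))).mul_left (a d)

variable [NormSMulClass ℤ 𝕜]

lemma summable_natCast_mul_pow_mul (hq : ‖q‖ < 1) :
    Summable fun c : ℕ+ × ℕ+ ↦ (c.1 : 𝕜) * q ^ (c.1 * c.2 : ℕ) :=
  (summable_prod_mul_pow 1 hq).prod_symm.congr fun c ↦ by
    rw [pow_one, Prod.fst_swap, Prod.snd_swap, mul_comm (c.2 : ℕ)]

lemma hasSum_succ_mul_lambert (hq : ‖q‖ < 1) :
    HasSum (fun n : ℕ ↦ (n + 1 : 𝕜) * lambert q (n + 1))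
      (∑' n : ℕ, (∑ d ∈ (n + 1).divisors, (d : 𝕜)) * q ^ (n + 1)) := by
  simpa using hasSum_mul_lambert (a := Nat.cast) hq (summable_natCast_mul_pow_mul hq)

-- The pairs `(d, c)` with weight `d` are here summed over `d` first.
lemma hasSum_lambert_add_sq (hq : ‖q‖ < 1) :
    HasSum (fun n : ℕ ↦ lambert q (n + 1) + lambert q (n + 1) ^ 2)
      (∑' n : ℕ, (∑ d ∈ (n + 1).divisors, (d : 𝕜)) * q ^ (n + 1)) := by
  have hsum := summable_natCast_mul_pow_mul hq
  rw [← tsum_mul_pow_mul_eq_tsum_sum_divisors (a := Nat.cast) hsum,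
    ← hasSum_pnat_iff_hasSum_succ (f := fun n ↦ lambert q n + lambert q n ^ 2)]
  refine ((Equiv.prodComm ℕ+ ℕ+).hasSum_iff.2 hsum.hasSum).prod_fiberwise fun c ↦ ?_
  have hderiv := hasSum_coe_mul_geometric_of_norm_lt_one (norm_pow_lt_one_of_ne_zero hq c.ne_zero)
  rw [← hasSum_nat_add_iff' 1, Finset.sum_range_one, Nat.cast_zero, zero_mul, sub_zero] at hderiv
  have hne := one_sub_pow_ne_zero hq c.ne_zero
  have hvalue : lambert q c + lambert q c ^ 2 = q ^ (c : ℕ) / (1 - q ^ (c : ℕ)) ^ 2 := by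
    rw [lambert]
    field_simp
    ring
  refine (hasSum_pnat_iff_hasSum_succ (f := fun d ↦ (d : 𝕜) * q ^ (d * c : ℕ))).2 ?_
  simpa only [hvalue, pow_mul', mul_comm (c : ℕ)] using hderiv

end Divisors

section LevelThreeWeightOne

/-- The indicator function of the multiples of `3`, through which products of values of `χ₃` are
expressed. -/
noncomputable def threeDvd (n : ℕ) : ℂ := if 3 ∣ n then 1 else 0

lemma threeDvd_zero : threeDvd 0 = 1 := if_pos (dvd_zero 3)

lemma norm_threeDvd_le (n : ℕ) : ‖threeDvd n‖ ≤ 1 := by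
  unfold threeDvd
  split_ifs <;> simp

lemma norm_χ₃_le (n : ℕ) : ‖χ₃ n‖ ≤ 1 := by
  unfold χ₃
  split_ifs <;> simp

lemma χ₃_mul_χ₃ (m n : ℕ) : χ₃ m * χ₃ n = threeDvd (m.dist n) - threeDvd (m + n) := by
  have hdist : 3 ∣ m.dist n ↔ m % 3 = n % 3 := by
    unfold Nat.dist
    omega
  unfold χ₃ threeDvd
  rcases (by omega : m % 3 = 0 ∨ m % 3 = 1 ∨ m % 3 = 2) with hm | hm | hm <;>
  rcases (by omega : n % 3 = 0 ∨ n % 3 = 1 ∨ n % 3 = 2) with hn | hn | hn <;>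
  simp [hdist, hm, hn, Nat.dvd_iff_mod_eq_zero, Nat.add_mod]

lemma sum_range_threeDvd_succ (n : ℕ) : ∑ d ∈ Finset.range n, threeDvd (d + 1) = (n / 3 : ℕ) := by
  induction n with
  | zero => simp
  | succ n ih =>
    rw [Finset.sum_range_succ, ih, Nat.succ_div, threeDvd]
    split_ifs <;> simp

lemma χ₃_succ_eq (n : ℕ) :
    χ₃ (n + 1) = 3 - 2 * (n + 1) + 6 * (n / 3 : ℕ) + 3 * threeDvd (n + 1) := by
  obtain ⟨k, rfl | rfl | rfl⟩ : ∃ k, n = 3 * k ∨ n = 3 * k + 1 ∨ n = 3 * k + 2 :=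
    ⟨n / 3, by omega⟩
  · have hχ : χ₃ (3 * k + 1) = 1 := by simp [χ₃, (by omega : (3 * k + 1) % 3 = 1)]
    have ht : threeDvd (3 * k + 1) = 0 := if_neg (by omega)
    rw [hχ, ht, (by omega : 3 * k / 3 = k)]
    push_cast
    ring
  · have hχ : χ₃ (3 * k + 1 + 1) = -1 := by simp [χ₃, (by omega : (3 * k + 1 + 1) % 3 = 2)]
    have ht : threeDvd (3 * k + 1 + 1) = 0 := if_neg (by omega)
    rw [hχ, ht, (by omega : (3 * k + 1) / 3 = k)]
    push_cast
    ring
  · have hχ : χ₃ (3 * k + 2 + 1) = 0 := by simp [χ₃, (by omega : (3 * k + 2 + 1) % 3 = 0)]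
    have ht : threeDvd (3 * k + 2 + 1) = 1 := if_pos (by omega)
    rw [hχ, ht, (by omega : (3 * k + 2) / 3 = k)]
    push_cast
    ring

lemma hasSum_threeDvd_mul_iff {f : ℕ → ℂ} {s : ℂ} :
    HasSum (fun n ↦ threeDvd (n + 1) * f (n + 1)) s ↔ HasSum (fun k ↦ f (3 * (k + 1))) s := by
  have hinj : Function.Injective fun k : ℕ ↦ 3 * k + 2 := fun a b h ↦ by
    simp only at h
    omega
  rw [← hinj.hasSum_iff]
  · simp [Function.comp_def, threeDvd, mul_add, add_assoc, Nat.dvd_iff_mod_eq_zero]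
  · intro n hn
    have h3 : ¬ 3 ∣ n + 1 := fun h ↦ hn ⟨n / 3, by simp only; omega⟩
    rw [threeDvd, if_neg h3, zero_mul]

variable {q : ℂ}

lemma summable_χ₃_mul_pow_mul (hq : ‖q‖ < 1) :
    Summable fun c : ℕ+ × ℕ+ ↦ χ₃ c.1 * q ^ (c.1 * c.2 : ℕ) := by
  refine .of_norm_bounded (summable_prod_mul_pow 0 hq).norm fun c ↦ ?_
  rw [norm_mul, pow_zero, one_mul]
  exact mul_le_of_le_one_left (norm_nonneg _) (norm_χ₃_le _)

lemma hasSum_sq_tsum_χ₃_mul_lambert (hq : ‖q‖ < 1) :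
    HasSum (fun n : ℕ ↦ (1 + 2 * threeDvd (n + 1)) * lambert q (n + 1) ^ 2 -
        (n * threeDvd (n + 1) + 2 * (n / 3 : ℕ)) * lambert q (n + 1))
      ((∑' n, χ₃ (n + 1) * lambert q (n + 1)) ^ 2) := by
  have hnorm : Summable fun n ↦ ‖χ₃ (n + 1) * lambert q (n + 1)‖ :=
    (hasSum_mul_lambert hq (summable_χ₃_mul_pow_mul hq)).summable.norm
  have hmul (p : ℕ × ℕ) : χ₃ (p.1 + 1) * lambert q (p.1 + 1) *
      (χ₃ (p.2 + 1) * lambert q (p.2 + 1)) =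
      (threeDvd (p.1.dist p.2) - threeDvd (p.1 + p.2 + 2)) *
        (lambert q (p.1 + 1) * lambert q (p.2 + 1)) := by
    rw [mul_mul_mul_comm, χ₃_mul_χ₃, Nat.dist_add_add_right, add_add_add_comm]
  have h := hasSum_lambert_mul_lambert_dist_sub_add hq norm_threeDvd_le
  rw [pow_two, tsum_mul_tsum_of_summable_norm hnorm hnorm, tsum_congr hmul]
  simpa only [sum_range_threeDvd_succ, threeDvd_zero] using h

lemma hasSum_threeDvd_mul_lambert (hq : ‖q‖ < 1) :
    HasSum (fun n : ℕ ↦ threeDvd (n + 1) * (2 * (lambert q (n + 1) + lambert q (n + 1) ^ 2) -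
        (n + 1) * lambert q (n + 1)))
      (-∑' n : ℕ, sigmaC 1 (n + 1) * (q ^ 3) ^ (n + 1)) := by
  have hq3 := norm_pow_lt_one_of_ne_zero hq three_ne_zero
  have h := ((hasSum_lambert_add_sq hq3).mul_left 2).sub ((hasSum_succ_mul_lambert hq3).mul_left 3)
  have hmultiples := (hasSum_threeDvd_mul_iff
    (f := fun n ↦ 2 * (lambert q n + lambert q n ^ 2) - n * lambert q n)).2
    (h.congr_fun fun k ↦ by
      rw [lambert_mul]
      push_cast
      ring)
  simp only [sigmaC, pow_one]
  convert hmultiples using 1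
  · push_cast
    rfl
  · ring

lemma sq_tsum_χ₃_mul_lambert_add (hq : ‖q‖ < 1) :
    (∑' n, χ₃ (n + 1) * lambert q (n + 1)) ^ 2 + (∑' n, χ₃ (n + 1) * lambert q (n + 1)) / 3 =
      (∑' n : ℕ, sigmaC 1 (n + 1) * q ^ (n + 1)) / 3 -
        ∑' n : ℕ, sigmaC 1 (n + 1) * (q ^ 3) ^ (n + 1) := by
  have hχ := (hasSum_mul_lambert hq (summable_χ₃_mul_pow_mul hq)).summable.hasSum
  have hleft := (hasSum_sq_tsum_χ₃_mul_lambert hq).add (hχ.div_const 3)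
  have hright := ((hasSum_lambert_add_sq hq).sub
    ((hasSum_succ_mul_lambert hq).mul_left (2 / 3))).add (hasSum_threeDvd_mul_lambert hq)
  rw [hleft.unique (hright.congr_fun fun n ↦ ?_)]
  · simp only [sigmaC, pow_one]
    ring
  · linear_combination (lambert q (n + 1) / 3) * χ₃_succ_eq n

theorem E₁₃_sq {τ : ℂ} (hτ : 0 < τ.im) : E₁₃ τ ^ 2 = E₃₂ τ / 36 := by
  have hq := norm_qq_lt_one hτ
  have h := sq_tsum_χ₃_mul_lambert_add hq
  rw [(hasSum_mul_lambert hq (summable_χ₃_mul_pow_mul hq)).tsum_eq] at h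
  rw [E₁₃, E₃₂, E₂, E₂, qq_three_mul]
  linear_combination h

end LevelThreeWeightOne

theorem stmt12 (τ : ℂ) (hτ : 0 < τ.im) :
    E₃₂ τ ^ 4 - E₃₄ τ ^ 2 = 3888 * (η τ * η (3 * τ)) ^ 6 * E₁₃ τ ^ 2 := by
  rw [E₃₂_pow_four_sub_E₃₄_sq hτ, E₁₃_sq hτ]
  ring
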